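/- Let n ≥ 3, let F_y = (e_{n-1}+e_n ⊂ e_1 ⊂ ⋯ ⊂ e_{n-2} ⊂ e_n), let B_{n-1} = {g ∈ K : g U_k = U_k for all 1 ≤ k ≤ n-1} (a Borel subgroup of K), let B_{n-2} = {g ∈ GL(n,ℂ) : g e_{n-1} = e_{n-1}, g e_n = e_n, and g U_k = U_k for all 1 ≤ k ≤ n-2}, and let E = (U_1 ⊂ U_2 ⊂ ⋯ ⊂ U_{n-1}) be the standard complete flag of the subspace U_{n-1}. Then for all k, k' ∈ K one has B_{n-1}·(k·F_y) = B_{n-1}·(k'·F_y) if and only if B_{n-2}·(k^{-1}·E) = B_{n-2}·(k'^{-1}·E); consequently the assignment B_{n-1}·(k·F_y) ↦ B_{n-2}·(k^{-1}·E) is a well-defined bijection from the set of B_{n-1}-orbits on the K-orbit of F_y onto the set of B_{n-2}-orbits on the set of complete flags of U_{n-1} (chains 0 = W_0 ⊂ W_1 ⊂ ⋯ ⊂ W_{n-1} = U_{n-1} with dim W_k = k). -/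

import Mathlib

open Module Submodule

noncomputable section

/-- `stdVec n m` is the `m`-th standard basis vector of `ℂ^n` (1-indexed); `0` out of range. -/
def stdVec (n m : ℕ) : Fin n → ℂ :=
  if h : 1 ≤ m ∧ m ≤ n then Pi.single (⟨m - 1, by omega⟩ : Fin n) 1 else 0

/-- `stdSub n k` is the subspace `U_k = span(e_1, …, e_k)` of `ℂ^n`. -/
def stdSub (n k : ℕ) : Submodule ℂ (Fin n → ℂ) :=
  span ℂ (stdVec n '' Set.Icc 1 k)

/-- The action of an invertible linear map of `ℂ^n` on a chain of subspaces. -/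
def actFlag (n : ℕ) (g : (Fin n → ℂ) ≃ₗ[ℂ] (Fin n → ℂ))
    (V : ℕ → Submodule ℂ (Fin n → ℂ)) (k : ℕ) : Submodule ℂ (Fin n → ℂ) :=
  Submodule.map g.toLinearMap (V k)

/-- The orbit of the chain `V` under a set `B` of invertible linear maps. -/
def orbitOf (n : ℕ) (B : Set ((Fin n → ℂ) ≃ₗ[ℂ] (Fin n → ℂ)))
    (V : ℕ → Submodule ℂ (Fin n → ℂ)) : Set (ℕ → Submodule ℂ (Fin n → ℂ)) :=
  {V' | ∃ b ∈ B, actFlag n b V = V'}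

/-- A complete flag in `ℂ^n`: `V k` is the `k`-dimensional member for `0 ≤ k ≤ n`;
values above `n` are pinned so that two flags are equal iff they agree in degrees `≤ n`. -/
def IsCompleteFlag (n : ℕ) (V : ℕ → Submodule ℂ (Fin n → ℂ)) : Prop :=
  (∀ k, k ≤ n → finrank ℂ ↥(V k) = k) ∧ (∀ k, V k ≤ V (k + 1)) ∧ (∀ k, n ≤ k → V k = V n)

/-- The complete flag `(v 1 ⊂ v 2 ⊂ ⋯ ⊂ v n)` spanned by the vectors `v 1, …, v n`. -/
def flagOf (n : ℕ) (v : ℕ → Fin n → ℂ) (k : ℕ) : Submodule ℂ (Fin n → ℂ) :=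
  span ℂ (v '' Set.Icc 1 (min k n))

/-- `K = {g ∈ GL(n,ℂ) : g e_n = e_n, g U_{n-1} = U_{n-1}}`, a copy of `GL(n-1,ℂ)`. -/
def Ksub (n : ℕ) : Set ((Fin n → ℂ) ≃ₗ[ℂ] (Fin n → ℂ)) :=
  {g | g (stdVec n n) = stdVec n n ∧
       Submodule.map g.toLinearMap (stdSub n (n - 1)) = stdSub n (n - 1)}

/-- `V'` lies in the `K`-orbit of `V`. -/
def InKOrbit (n : ℕ) (V V' : ℕ → Submodule ℂ (Fin n → ℂ)) : Prop :=
  ∃ g ∈ Ksub n, actFlag n g V = V'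

/-- Vectors of the representative flags: for `i = j` this gives the flag `F_i`
`(e_1 ⊂ ⋯ ⊂ e_{i-1} ⊂ e_n ⊂ e_i ⊂ ⋯ ⊂ e_{n-1})` (`e_n` in position `i`), and for
`i < j` the flag `F_{i,j}`
`(e_1 ⊂ ⋯ ⊂ e_{i-1} ⊂ e_i + e_n ⊂ e_{i+1} ⊂ ⋯ ⊂ e_{j-1} ⊂ e_n ⊂ e_j ⊂ ⋯ ⊂ e_{n-1})`. -/
def repVec (n i j m : ℕ) : Fin n → ℂ :=
  if m < i then stdVec n m
  else if m = i then (if i < j then stdVec n i else 0) + stdVec n n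
  else if m < j then stdVec n m
  else if m = j then stdVec n n
  else stdVec n (m - 1)

/-- `repFlag n i i = F_i` and `repFlag n i j = F_{i,j}` for `i < j`. -/
def repFlag (n i j : ℕ) : ℕ → Submodule ℂ (Fin n → ℂ) := flagOf n (repVec n i j)

/-- The flag `F_y = (e_{n-1} + e_n ⊂ e_1 ⊂ e_2 ⊂ ⋯ ⊂ e_{n-2} ⊂ e_n)`. -/
def FyVec (n m : ℕ) : Fin n → ℂ :=
  if m = 1 then stdVec n (n - 1) + stdVec n n
  else if m = n then stdVec n n
  else stdVec n (m - 1)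

def FyFlag (n : ℕ) : ℕ → Submodule ℂ (Fin n → ℂ) := flagOf n (FyVec n)

/-- `B_{n-1} = {g ∈ K : g U_k = U_k, 1 ≤ k ≤ n-1}`, a Borel subgroup of `K`. -/
def BFull (n : ℕ) : Set ((Fin n → ℂ) ≃ₗ[ℂ] (Fin n → ℂ)) :=
  {g | g ∈ Ksub n ∧ ∀ k, 1 ≤ k → k ≤ n - 1 →
    Submodule.map g.toLinearMap (stdSub n k) = stdSub n k}

/-- `B_{n-2} = {g ∈ GL(n,ℂ) : g e_{n-1} = e_{n-1}, g e_n = e_n, g U_k = U_k (1 ≤ k ≤ n-2)}`. -/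
def BSmall (n : ℕ) : Set ((Fin n → ℂ) ≃ₗ[ℂ] (Fin n → ℂ)) :=
  {g | g (stdVec n (n - 1)) = stdVec n (n - 1) ∧ g (stdVec n n) = stdVec n n ∧
       ∀ k, 1 ≤ k → k ≤ n - 2 → Submodule.map g.toLinearMap (stdSub n k) = stdSub n k}

/-- The standard complete flag `E = (U_1 ⊂ U_2 ⊂ ⋯ ⊂ U_{n-1})` of the subspace `U_{n-1}`. -/
def EFlag (n k : ℕ) : Submodule ℂ (Fin n → ℂ) := stdSub n (min k (n - 1))

/-- Complete flags of the subspace `U_{n-1}`: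
chains `0 = W_0 ⊂ W_1 ⊂ ⋯ ⊂ W_{n-1} = U_{n-1}` with `dim W_k = k`. -/
def IsFlagOfU (n : ℕ) (W : ℕ → Submodule ℂ (Fin n → ℂ)) : Prop :=
  (∀ k, k ≤ n - 1 → finrank ℂ ↥(W k) = k) ∧ (∀ k, W k ≤ W (k + 1)) ∧
    (∀ k, n - 1 ≤ k → W k = W (n - 1)) ∧ W (n - 1) = stdSub n (n - 1)

/-!
The group `K` is transitive on the complete flags of `U_{n-1}`, and inside `K`, `B_{n-1}` is the
stabilizer of `E` while `B_{n-2}` is the stabilizer of `F_y`. Hence both orbit equalities say that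
`k` and `k'` lie in the same `(B_{n-1}, B_{n-2})`-double coset in `K`.

That `B_{n-2}` is the stabilizer of `F_y` rests on `F_y (j+1) ⊓ U_{n-1} = U_j` for `j ≤ n-2`, and
on the fact that an element of `K` preserving the line through `e_{n-1} + e_n` must fix `e_{n-1}`,
as it fixes `e_n` and preserves `U_{n-1}`.
-/

section GroupAction

open MulAction

variable {G X Y : Type*} [Group G] [MulAction G X] [MulAction G Y]

theorem inv_smul_mem_orbit_stabilizer {x : X} {y : Y} {a b : G}
    (h : a • x ∈ orbit (stabilizer G y) (b • x)) :
    a⁻¹ • y ∈ orbit (stabilizer G x) (b⁻¹ • y) := by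
  obtain ⟨⟨c, hc : c • y = y⟩, hcb : c • b • x = a • x⟩ := h
  have hx : (a⁻¹ * c * b) • x = x := by rw [mul_smul, mul_smul, hcb, inv_smul_smul]
  refine ⟨⟨a⁻¹ * c * b, hx⟩, ?_⟩
  change (a⁻¹ * c * b) • b⁻¹ • y = a⁻¹ • y
  rw [mul_smul, smul_inv_smul, mul_smul, hc]

theorem orbit_stabilizer_smul_eq_iff (x : X) (y : Y) (a b : G) :
    orbit (stabilizer G y) (a • x) = orbit (stabilizer G y) (b • x) ↔
      orbit (stabilizer G x) (a⁻¹ • y) = orbit (stabilizer G x) (b⁻¹ • y) := by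
  rw [orbit_eq_iff, orbit_eq_iff]
  exact ⟨inv_smul_mem_orbit_stabilizer,
    fun h => by simpa only [inv_inv] using inv_smul_mem_orbit_stabilizer h⟩

end GroupAction

section Span

variable {R M : Type*} [Ring R] [AddCommGroup M] [Module R M]

theorem span_image_Icc_succ (v : ℕ → M) (k : ℕ) :
    span R (v '' Set.Icc 1 (k + 1)) = span R {v (k + 1)} ⊔ span R (v '' Set.Icc 1 k) := by
  rw [← Set.insert_Icc_right_eq_Icc_add_one (by omega), Set.image_insert_eq, span_insert]

theorem span_singleton_sup_span_singleton_add (x y : M) :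
    span R {y} ⊔ span R {x + y} = span R {y} ⊔ span R {x} := by
  refine le_antisymm (sup_le le_sup_left ?_) (sup_le le_sup_left ?_) <;>
    rw [span_singleton_le_iff_mem, mem_sup]
  · exact ⟨y, mem_span_singleton_self y, x, mem_span_singleton_self x, add_comm y x⟩
  · exact ⟨-y, neg_mem (mem_span_singleton_self y), x + y, mem_span_singleton_self _,
      by abel⟩

theorem exists_span_singleton_sup_eq_of_covBy {A B : Submodule R M} (h : A ⋖ B) :
    ∃ w, span R {w} ⊔ A = B := by
  obtain ⟨w, hwB, hwA⟩ := SetLike.exists_of_lt h.lt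
  have hlt : A < span R {w} ⊔ A := by simpa using hwA
  have hle : span R {w} ⊔ A ≤ B := sup_le ((span_singleton_le_iff_mem w B).2 hwB) h.le
  exact ⟨w, (h.eq_or_eq hlt.le hle).resolve_left hlt.ne'⟩

theorem exists_span_image_Icc_eq_of_covBy {W : ℕ → Submodule R M} {m : ℕ} (hbot : W 0 = ⊥)
    (hcov : ∀ k < m, W k ⋖ W (k + 1)) :
    ∃ w : ℕ → M, ∀ k ≤ m, span R (w '' Set.Icc 1 k) = W k := by
  have hstep (k : ℕ) : ∃ w, k < m → span R {w} ⊔ W k = W (k + 1) := by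
    by_cases hk : k < m
    · obtain ⟨w, hw⟩ := exists_span_singleton_sup_eq_of_covBy (hcov k hk)
      exact ⟨w, fun _ => hw⟩
    · exact ⟨0, fun h => absurd h hk⟩
  choose w hw using hstep
  refine ⟨fun k => w (k - 1), fun k => ?_⟩
  induction k with
  | zero => simp [hbot]
  | succ k ih =>
    intro hk
    rw [span_image_Icc_succ, ih (by omega), Nat.add_sub_cancel, hw k hk]

end Span

section VectorSpace

variable {K V : Type*} [DivisionRing K] [AddCommGroup V] [Module K V]

theorem covBy_of_finrank_eq_add_one {A B : Submodule K V} (hle : A ≤ B)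
    (hrank : finrank K B = finrank K A + 1) : A ⋖ B := by
  have : Module.Finite K B := Module.finite_of_finrank_pos (by omega)
  refine ⟨lt_of_le_of_ne hle (by rintro rfl; omega), fun C hAC hCB => ?_⟩
  have : Module.Finite K C := Submodule.finiteDimensional_of_le hCB.le
  have hAC' := finrank_lt_finrank_of_lt hAC
  have hCB' := finrank_lt_finrank_of_lt hCB
  omega

theorem span_singleton_sup_inf_eq {A U : Submodule K V} {x : V} (hA : A ≤ U) (hx : x ∉ U) :
    (span K {x} ⊔ A) ⊓ U = A := by
  rw [sup_comm, sup_inf_assoc_of_le _ hA,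
    (disjoint_span_singleton_of_notMem hx).symm.eq_bot, sup_bot_eq]

theorem map_span_singleton_add_eq_iff {f : V →ₗ[K] V} {U : Submodule K V} {x e : V}
    (hx : x ∈ U) (hfx : f x ∈ U) (he : e ∉ U) (hfe : f e = e) :
    Submodule.map f (span K {x + e}) = span K {x + e} ↔ f x = x := by
  rw [Submodule.map_span, Set.image_singleton, map_add, hfe]
  refine ⟨fun h => ?_, fun h => by rw [h]⟩
  obtain ⟨c, hc⟩ := mem_span_singleton.1 (h ▸ mem_span_singleton_self (f x + e))
  have hmem : (c - 1) • e ∈ U := by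
    have hce : (c - 1) • e = f x - c • x := by
      rw [sub_smul, one_smul, sub_eq_sub_iff_add_eq_add, ← hc, smul_add, add_comm]
    exact hce ▸ U.sub_mem hfx (U.smul_mem c hx)
  have hc1 : c = 1 := by
    by_contra hne
    exact he ((U.smul_mem_iff (sub_ne_zero.2 hne)).1 hmem)
  rw [hc1, one_smul] at hc
  exact (add_right_cancel hc).symm

end VectorSpace

section StandardFlag

theorem stdVec_succ {n : ℕ} (i : Fin n) : stdVec n (i + 1) = Pi.basisFun ℂ (Fin n) i := by
  simp [stdVec]

theorem stdVec_mem_stdSub {n m k : ℕ} (hm : 1 ≤ m) (hmk : m ≤ k) : stdVec n m ∈ stdSub n k :=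
  subset_span ⟨m, ⟨hm, hmk⟩, rfl⟩

theorem stdSub_zero (n : ℕ) : stdSub n 0 = ⊥ := by
  simp [stdSub]

theorem stdSub_succ (n k : ℕ) :
    stdSub n (k + 1) = span ℂ {stdVec n (k + 1)} ⊔ stdSub n k :=
  span_image_Icc_succ _ _

theorem stdSub_mono (n : ℕ) : Monotone (stdSub n) := fun _ _ h =>
  span_mono (Set.image_mono (Set.Icc_subset_Icc_right h))

theorem stdSub_self (n : ℕ) : stdSub n n = ⊤ := by
  rw [eq_top_iff, ← (Pi.basisFun ℂ (Fin n)).span_eq, span_le]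
  rintro _ ⟨i, rfl⟩
  rw [← stdVec_succ]
  exact stdVec_mem_stdSub (by omega) (by omega)

theorem stdVec_succ_notMem_stdSub {n k : ℕ} (hk : k < n) : stdVec n (k + 1) ∉ stdSub n k := by
  have hle : stdSub n k ≤ LinearMap.ker (LinearMap.proj (R := ℂ) (⟨k, hk⟩ : Fin n)) := by
    refine span_le.2 ?_
    rintro _ ⟨m, ⟨hm, hmk⟩, rfl⟩
    obtain ⟨i, rfl⟩ := Nat.exists_eq_add_of_le' hm
    have hne : (⟨i, by omega⟩ : Fin n) ≠ ⟨k, hk⟩ := by simp only [ne_eq, Fin.mk.injEq]; omega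
    simp [stdVec_succ (⟨i, by omega⟩ : Fin n), hne]
  intro hmem
  simpa [stdVec_succ (⟨k, hk⟩ : Fin n)] using hle hmem

theorem exists_linearEquiv_stdVec_eq {n : ℕ} {v : ℕ → Fin n → ℂ}
    (hv : span ℂ (v '' Set.Icc 1 n) = ⊤) :
    ∃ g : (Fin n → ℂ) ≃ₗ[ℂ] (Fin n → ℂ), ∀ m ∈ Set.Icc 1 n, g (stdVec n m) = v m := by
  have hspan : ⊤ ≤ span ℂ (Set.range fun i : Fin n => v (i + 1)) := by
    rw [← hv]
    refine span_mono ?_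
    rintro _ ⟨m, ⟨hm, hmn⟩, rfl⟩
    exact ⟨⟨m - 1, by omega⟩, congrArg v (Nat.sub_add_cancel hm)⟩
  let b := basisOfTopLeSpanOfCardEqFinrank _ hspan (by simp)
  refine ⟨(Pi.basisFun ℂ (Fin n)).equiv b (Equiv.refl _), fun m ⟨hm, hmn⟩ => ?_⟩
  obtain ⟨i, rfl⟩ := Nat.exists_eq_add_of_le' hm
  rw [stdVec_succ (⟨i, hmn⟩ : Fin n), Basis.equiv_apply]
  simp [b]

theorem map_stdSub {n k : ℕ} {f : (Fin n → ℂ) →ₗ[ℂ] (Fin n → ℂ)} {v : ℕ → Fin n → ℂ}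
    (hf : ∀ m ∈ Set.Icc 1 k, f (stdVec n m) = v m) :
    Submodule.map f (stdSub n k) = span ℂ (v '' Set.Icc 1 k) := by
  rw [stdSub, Submodule.map_span, Set.image_image, Set.image_congr hf]

theorem forall_map_stdSub_eq_iff {n m : ℕ} {f : (Fin n → ℂ) →ₗ[ℂ] (Fin n → ℂ)} :
    (∀ k, 1 ≤ k → k ≤ m → Submodule.map f (stdSub n k) = stdSub n k) ↔
      ∀ k ≤ m, Submodule.map f (stdSub n k) = stdSub n k := by
  refine ⟨fun h k hk => ?_, fun h k _ => h k⟩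
  rcases k.eq_zero_or_pos with rfl | hpos
  · rw [stdSub_zero, Submodule.map_bot]
  · exact h k hpos hk

end StandardFlag

section FlagFy

theorem FyFlag_zero (n : ℕ) : FyFlag n 0 = ⊥ := by
  simp [FyFlag, flagOf]

variable {n : ℕ}

theorem FyFlag_succ {j : ℕ} (hj : j + 2 ≤ n) :
    FyFlag n (j + 1) = span ℂ {stdVec n (n - 1) + stdVec n n} ⊔ stdSub n j := by
  have hFy (k : ℕ) (hk : k ≤ n) : FyFlag n k = span ℂ (FyVec n '' Set.Icc 1 k) := by
    rw [FyFlag, flagOf, min_eq_left hk]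
  induction j with
  | zero => simp [hFy 1 (by omega), stdSub_zero, FyVec]
  | succ j ih =>
    have hvec : FyVec n (j + 2) = stdVec n (j + 1) := by
      rw [FyVec, if_neg (by omega), if_neg (by omega), Nat.add_succ_sub_one]
    rw [hFy _ (by omega), span_image_Icc_succ, ← hFy _ (by omega), ih (by omega), hvec,
      sup_left_comm, ← stdSub_succ]

theorem FyFlag_eq_top {k : ℕ} (hn : 2 ≤ n) (hk : n ≤ k) : FyFlag n k = ⊤ := by
  obtain ⟨m, rfl⟩ := Nat.exists_eq_add_of_le' hn
  have hlast : FyFlag (m + 2) k = span ℂ {stdVec (m + 2) (m + 2)} ⊔ FyFlag (m + 2) (m + 1) := by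
    simp only [FyFlag, flagOf, min_eq_right hk, min_eq_left (Nat.le_succ (m + 1)),
      span_image_Icc_succ _ (m + 1)]
    simp [FyVec]
  rw [hlast, FyFlag_succ le_rfl, ← sup_assoc, Nat.add_succ_sub_one,
    span_singleton_sup_span_singleton_add, sup_assoc, ← stdSub_succ, ← stdSub_succ, stdSub_self]

theorem FyFlag_succ_inf_stdSub {j : ℕ} (hj : j + 2 ≤ n) :
    FyFlag n (j + 1) ⊓ stdSub n (n - 1) = stdSub n j := by
  obtain ⟨m, rfl⟩ := Nat.exists_eq_add_of_le' (show 2 ≤ n by omega)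
  rw [FyFlag_succ hj]
  refine span_singleton_sup_inf_eq (stdSub_mono _ (by omega)) fun hmem => ?_
  refine stdVec_succ_notMem_stdSub (show m + 1 < m + 2 by omega) ?_
  exact ((stdSub _ _).add_mem_iff_right (stdVec_mem_stdSub (by omega) le_rfl)).1 hmem

end FlagFy

section Stabilizers

variable {n : ℕ}

theorem mem_BFull_iff (g : (Fin n → ℂ) ≃ₗ[ℂ] (Fin n → ℂ)) :
    g ∈ BFull n ↔ g ∈ Ksub n ∧ actFlag n g (EFlag n) = EFlag n := by
  refine and_congr_right fun _ => forall_map_stdSub_eq_iff.trans ⟨fun h => ?_, fun h k hk => ?_⟩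
  · exact funext fun k => h _ (min_le_right k (n - 1))
  · simpa only [actFlag, EFlag, min_eq_left hk] using congrFun h k

theorem actFlag_FyFlag_eq_iff (hn : 2 ≤ n) {g : (Fin n → ℂ) ≃ₗ[ℂ] (Fin n → ℂ)}
    (hg : g ∈ Ksub n) :
    actFlag n g (FyFlag n) = FyFlag n ↔
      Submodule.map g.toLinearMap (span ℂ {stdVec n (n - 1) + stdVec n n}) =
          span ℂ {stdVec n (n - 1) + stdVec n n} ∧
        ∀ k ≤ n - 2, Submodule.map g.toLinearMap (stdSub n k) = stdSub n k := by
  constructor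
  · intro h
    have hmap (k : ℕ) : Submodule.map g.toLinearMap (FyFlag n k) = FyFlag n k := congrFun h k
    refine ⟨?_, fun k hk => ?_⟩
    · simpa only [FyFlag_succ (show 0 + 2 ≤ n from hn), stdSub_zero, sup_bot_eq] using hmap (0 + 1)
    · rw [← FyFlag_succ_inf_stdSub (show k + 2 ≤ n by omega),
        Submodule.map_inf _ g.injective, hmap, hg.2]
  · rintro ⟨hline, hstd⟩
    funext k
    change Submodule.map g.toLinearMap (FyFlag n k) = FyFlag n k
    obtain rfl | ⟨j, rfl, hj⟩ | hk : k = 0 ∨ (∃ j, k = j + 1 ∧ j + 2 ≤ n) ∨ n ≤ k := by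
      rcases k with _ | j
      · exact .inl rfl
      · by_cases hj : j + 2 ≤ n
        · exact .inr (.inl ⟨j, rfl, hj⟩)
        · exact .inr (.inr (by omega))
    · rw [FyFlag_zero, Submodule.map_bot]
    · rw [FyFlag_succ hj, Submodule.map_sup, hline, hstd j (by omega)]
    · rw [FyFlag_eq_top hn hk, Submodule.map_top, LinearEquiv.range]

theorem mem_Ksub_of_mem_BSmall (hn : 2 ≤ n) {g : (Fin n → ℂ) ≃ₗ[ℂ] (Fin n → ℂ)}
    (hg : g ∈ BSmall n) : g ∈ Ksub n := by
  obtain ⟨m, rfl⟩ := Nat.exists_eq_add_of_le' hn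
  obtain ⟨hfix, hlast, hstd⟩ := hg
  simp only [Nat.add_succ_sub_one] at hfix
  refine ⟨hlast, ?_⟩
  rw [Nat.add_succ_sub_one, stdSub_succ, Submodule.map_sup, Submodule.map_span,
    Set.image_singleton, LinearEquiv.coe_coe, hfix, forall_map_stdSub_eq_iff.1 hstd m le_rfl]

theorem mem_BSmall_iff (hn : 2 ≤ n) (g : (Fin n → ℂ) ≃ₗ[ℂ] (Fin n → ℂ)) :
    g ∈ BSmall n ↔ g ∈ Ksub n ∧ actFlag n g (FyFlag n) = FyFlag n := by
  rw [← and_iff_right_of_imp (mem_Ksub_of_mem_BSmall hn)]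
  refine and_congr_right fun hg => ?_
  obtain ⟨m, rfl⟩ := Nat.exists_eq_add_of_le' hn
  have hmem : stdVec (m + 2) (m + 1) ∈ stdSub (m + 2) (m + 1) :=
    stdVec_mem_stdSub (by omega) le_rfl
  have hgmem : g (stdVec (m + 2) (m + 1)) ∈ stdSub (m + 2) (m + 1) :=
    hg.2.le (mem_map_of_mem hmem)
  have hline := map_span_singleton_add_eq_iff (f := g.toLinearMap) hmem hgmem
    (stdVec_succ_notMem_stdSub (by omega)) hg.1
  rw [actFlag_FyFlag_eq_iff hn hg, ← forall_map_stdSub_eq_iff]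
  exact and_congr hline.symm (and_iff_right hg.1)

end Stabilizers

section Orbits

open MulAction
open scoped Pointwise

/-- The set `Ksub n` as a subgroup of the linear automorphisms of `ℂ^n`, written as an intersection
of stabilizers so that membership unfolds definitionally to membership in `Ksub n`. -/
def KSubgroup (n : ℕ) : Subgroup ((Fin n → ℂ) ≃ₗ[ℂ] (Fin n → ℂ)) :=
  stabilizer _ (stdVec n n) ⊓ stabilizer _ (stdSub n (n - 1))

theorem orbitOf_eq_orbit_stabilizer {n : ℕ} {H : Subgroup ((Fin n → ℂ) ≃ₗ[ℂ] (Fin n → ℂ))}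
    {B : Set ((Fin n → ℂ) ≃ₗ[ℂ] (Fin n → ℂ))} {F : ℕ → Submodule ℂ (Fin n → ℂ)}
    (hB : ∀ g, g ∈ B ↔ g ∈ H ∧ actFlag n g F = F) (V : ℕ → Submodule ℂ (Fin n → ℂ)) :
    orbitOf n B V = orbit (stabilizer H F) V := by
  ext V'
  constructor
  · rintro ⟨b, hb, hbV⟩
    obtain ⟨hbH, hbF⟩ := (hB b).1 hb
    exact ⟨⟨⟨b, hbH⟩, hbF⟩, hbV⟩
  · rintro ⟨⟨⟨b, hbH⟩, hbF⟩, hbV⟩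
    exact ⟨b, (hB b).2 ⟨hbH, hbF⟩, hbV⟩

theorem orbitOf_BFull (n : ℕ) (V : ℕ → Submodule ℂ (Fin n → ℂ)) :
    orbitOf n (BFull n) V = orbit (stabilizer (KSubgroup n) (EFlag n)) V :=
  orbitOf_eq_orbit_stabilizer mem_BFull_iff V

theorem orbitOf_BSmall {n : ℕ} (hn : 2 ≤ n) (V : ℕ → Submodule ℂ (Fin n → ℂ)) :
    orbitOf n (BSmall n) V = orbit (stabilizer (KSubgroup n) (FyFlag n)) V :=
  orbitOf_eq_orbit_stabilizer (mem_BSmall_iff hn) V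

theorem orbitOf_BFull_eq_iff_orbitOf_BSmall_eq {n : ℕ} (hn : 2 ≤ n)
    {a a' : (Fin n → ℂ) ≃ₗ[ℂ] (Fin n → ℂ)} (ha : a ∈ Ksub n) (ha' : a' ∈ Ksub n) :
    orbitOf n (BFull n) (actFlag n a (FyFlag n)) = orbitOf n (BFull n) (actFlag n a' (FyFlag n)) ↔
      orbitOf n (BSmall n) (actFlag n a.symm (EFlag n)) =
        orbitOf n (BSmall n) (actFlag n a'.symm (EFlag n)) := by
  simp only [orbitOf_BFull, orbitOf_BSmall hn]
  exact orbit_stabilizer_smul_eq_iff (G := KSubgroup n) (FyFlag n) (EFlag n) ⟨a, ha⟩ ⟨a', ha'⟩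

theorem exists_span_image_Icc_eq_of_isFlagOfU {n : ℕ} {W : ℕ → Submodule ℂ (Fin n → ℂ)}
    (hW : IsFlagOfU n W) :
    ∃ w : ℕ → Fin n → ℂ, ∀ k ≤ n - 1, span ℂ (w '' Set.Icc 1 k) = W k := by
  obtain ⟨hrank, hle, -, -⟩ := hW
  refine exists_span_image_Icc_eq_of_covBy (finrank_eq_zero.1 (hrank 0 (Nat.zero_le _)))
    fun k hk => covBy_of_finrank_eq_add_one (hle k) ?_
  rw [hrank _ hk, hrank _ hk.le]

theorem exists_mem_Ksub_actFlag_EFlag_eq {n : ℕ} (hn : 1 ≤ n) {W : ℕ → Submodule ℂ (Fin n → ℂ)}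
    (hW : IsFlagOfU n W) : ∃ g ∈ Ksub n, actFlag n g (EFlag n) = W := by
  obtain ⟨w, hw⟩ := exists_span_image_Icc_eq_of_isFlagOfU hW
  obtain ⟨-, -, hconst, htop⟩ := hW
  obtain ⟨m, rfl⟩ := Nat.exists_eq_add_of_le' hn
  rw [Nat.add_sub_cancel] at hw hconst htop
  let v := Function.update w (m + 1) (stdVec (m + 1) (m + 1))
  have hv (k : ℕ) (hk : k ≤ m) : span ℂ (v '' Set.Icc 1 k) = W k := by
    rw [← hw k hk]
    congr 1
    refine Set.image_congr fun i hi => Function.update_of_ne ?_ _ _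
    have := hi.2
    omega
  have hvlast : v (m + 1) = stdVec (m + 1) (m + 1) := Function.update_self ..
  have hspan : span ℂ (v '' Set.Icc 1 (m + 1)) = ⊤ := by
    rw [span_image_Icc_succ, hv m le_rfl, htop, hvlast, ← stdSub_succ, stdSub_self]
  obtain ⟨g, hg⟩ := exists_linearEquiv_stdVec_eq hspan
  have hmap (k : ℕ) (hk : k ≤ m) :
      Submodule.map g.toLinearMap (stdSub (m + 1) k) = W k := by
    rw [← hv k hk]
    exact map_stdSub fun i hi => hg i ⟨hi.1, hi.2.trans (by omega)⟩
  refine ⟨g, ⟨(hg _ ⟨hn, le_rfl⟩).trans hvlast, (hmap m le_rfl).trans htop⟩, funext fun k => ?_⟩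
  rw [actFlag, EFlag, Nat.add_sub_cancel, hmap _ (min_le_right k m)]
  rcases le_total k m with hk | hk
  · rw [min_eq_left hk]
  · rw [min_eq_right hk, hconst k hk]

end Orbits

/-- `B_{n-1}·(k·F_y) = B_{n-1}·(k'·F_y)` iff `B_{n-2}·(k⁻¹·E) = B_{n-2}·(k'⁻¹·E)`, and
every `B_{n-2}`-orbit on the complete flags of `U_{n-1}` arises as some `B_{n-2}·(k⁻¹·E)`;
hence `B_{n-1}·(k·F_y) ↦ B_{n-2}·(k⁻¹·E)` is a well-defined bijection from the
`B_{n-1}`-orbits on `K·F_y` onto the `B_{n-2}`-orbits on the complete flags of `U_{n-1}`. -/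
theorem stmt_9 (n : ℕ) (hn : 3 ≤ n) :
    (∀ a ∈ Ksub n, ∀ a' ∈ Ksub n,
      (orbitOf n (BFull n) (actFlag n a (FyFlag n)) =
          orbitOf n (BFull n) (actFlag n a' (FyFlag n)) ↔
        orbitOf n (BSmall n) (actFlag n a.symm (EFlag n)) =
          orbitOf n (BSmall n) (actFlag n a'.symm (EFlag n)))) ∧
    (∀ W, IsFlagOfU n W →
      ∃ a ∈ Ksub n, orbitOf n (BSmall n) (actFlag n a.symm (EFlag n)) =
        orbitOf n (BSmall n) W) := by
  refine ⟨fun a ha a' ha' => orbitOf_BFull_eq_iff_orbitOf_BSmall_eq (by omega) ha ha',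
    fun W hW => ?_⟩
  obtain ⟨g, hg, hgE⟩ := exists_mem_Ksub_actFlag_EFlag_eq (by omega) hW
  refine ⟨g.symm, (KSubgroup n).inv_mem hg, ?_⟩
  rw [LinearEquiv.symm_symm, hgE]
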